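/- For every natural number n and all tuples a : Fin n → ℂ and ε : Fin n → ℂ, there exists a polynomial P in two variables over ℂ such that for all z, w ∈ ℂ and every choice of square roots s : Fin n → ℂ satisfying (s k)² = z − a k for all k, one has P(z, w) = ∏_{σ} (w − ∑_{k} σ(k) · ε(k) · s(k)), where the product ranges over all sign functions σ : Fin n → {1, −1}. In particular, the value of this product is independent of the choice of the square roots s. -/

import Mathlib

open scoped BigOperators

/-!
The proof is by induction on `n`. Splitting off the sign `σ 0` gives
`Pₙ₊₁(z, w) = Pₙ(z, w - ε₀ s₀) * Pₙ(z, w + ε₀ s₀)`, so it suffices to see that the right-hand side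
is a polynomial in `z` and `w` when `s₀² = z - a₀`. Reducing modulo this relation,
`Pₙ(z, w + ε₀ s₀) = A(z, w) + s₀ B(z, w)` (`exists_split`). The same `A` and `B` serve both square
roots `± s₀`, so the product is the norm `A² - (z - a₀) B²`.
-/

/-- A shift of the second variable by a multiple of a square root `s` of `z - a` makes a polynomial
linear in `s`; the coefficients `A` and `B` do not depend on which square root is taken. -/
lemma exists_split (a e : ℂ) (Q : MvPolynomial (Fin 2) ℂ) :
    ∃ A B : MvPolynomial (Fin 2) ℂ, ∀ z w s : ℂ, s ^ 2 = z - a →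
      MvPolynomial.eval ![z, w + e * s] Q =
        MvPolynomial.eval ![z, w] A + s * MvPolynomial.eval ![z, w] B := by
  induction Q using MvPolynomial.induction_on with
  | C c => exact ⟨MvPolynomial.C c, 0, fun z w s _ => by simp⟩
  | add p q hp hq =>
    obtain ⟨A, B, h⟩ := hp
    obtain ⟨A', B', h'⟩ := hq
    refine ⟨A + A', B + B', fun z w s hs => ?_⟩
    simp only [map_add, h z w s hs, h' z w s hs]
    ring
  | mul_X p i hp =>
    obtain ⟨A, B, h⟩ := hp
    fin_cases i
    · refine ⟨A * MvPolynomial.X 0, B * MvPolynomial.X 0, fun z w s hs => ?_⟩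
      simp [h z w s hs]
      ring
    · -- `(A + s B) (w + e s) = (A w + e (z - a) B) + s (B w + e A)`
      refine ⟨A * MvPolynomial.X 1 +
          MvPolynomial.C e * (MvPolynomial.X 0 - MvPolynomial.C a) * B,
        B * MvPolynomial.X 1 + MvPolynomial.C e * A, fun z w s hs => ?_⟩
      simp [h z w s hs]
      linear_combination e * MvPolynomial.eval ![z, w] B * hs

lemma exists_norm (a e : ℂ) (Q : MvPolynomial (Fin 2) ℂ) :
    ∃ P : MvPolynomial (Fin 2) ℂ, ∀ z w s : ℂ, s ^ 2 = z - a →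
      MvPolynomial.eval ![z, w] P =
        MvPolynomial.eval ![z, w - e * s] Q * MvPolynomial.eval ![z, w + e * s] Q := by
  obtain ⟨A, B, h⟩ := exists_split a e Q
  refine ⟨A ^ 2 - (MvPolynomial.X 0 - MvPolynomial.C a) * B ^ 2, fun z w s hs => ?_⟩
  have h1 := h z w s hs
  have h2 := h z w (-s) (by rw [neg_sq, hs])
  rw [mul_neg, ← sub_eq_add_neg] at h2
  rw [h1, h2]
  simp
  linear_combination (MvPolynomial.eval ![z, w] B) ^ 2 * hs

/-- For all `n`, points `a : Fin n → ℂ` and coefficients `ε : Fin n → ℂ`, there is a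
polynomial `P` in two variables such that for all `z w : ℂ` and every choice of square
roots `s : Fin n → ℂ` with `(s k)² = z - a k`, the value `P (z, w)` equals the product of
`w - ∑ k, σ k • ε k • s k` over all sign functions `σ : Fin n → {1, -1}` (encoded as
`σ : Fin n → Bool`, with `true ↦ 1` and `false ↦ -1`). In particular, this product does
not depend on the choice of the square roots `s`. -/
theorem stmt_0 (n : ℕ) (a ε : Fin n → ℂ) :
    ∃ P : MvPolynomial (Fin 2) ℂ,
      ∀ z w : ℂ, ∀ s : Fin n → ℂ, (∀ k, (s k) ^ 2 = z - a k) →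
        MvPolynomial.eval ![z, w] P =
          ∏ σ : Fin n → Bool,
            (w - ∑ k, (if σ k then (1 : ℂ) else -1) * ε k * s k) := by
  induction n with
  | zero => exact ⟨MvPolynomial.X 1, fun z w s _ => by simp⟩
  | succ n ih =>
    obtain ⟨Q, hQ⟩ := ih (fun k => a k.succ) (fun k => ε k.succ)
    obtain ⟨P, hP⟩ := exists_norm (a 0) (ε 0) Q
    refine ⟨P, fun z w s hs => ?_⟩
    rw [hP z w (s 0) (hs 0), hQ z _ (fun k => s k.succ) (fun k => hs k.succ),
      hQ z _ (fun k => s k.succ) (fun k => hs k.succ),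
      ← (Fin.consEquiv fun _ : Fin (n + 1) => Bool).prod_comp, Fintype.prod_prod_type,
      Fintype.prod_bool]
    congr 1 <;> refine Finset.prod_congr rfl fun σ _ => ?_ <;>
      simp [Fin.sum_univ_succ, Fin.consEquiv] <;> ring
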